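/- arXiv:2312.06061 — 4 statements merged into one kernel-verified Lean document; each statement's English description precedes it below -/
import Mathlib

section
/- Every left semi-universally flexible loop is power-associative: for all x and all integers m, n, one has xᵐ·xⁿ = x^(m+n), where integer powers are defined left-associatedly by x⁰ = 1, x^(n+1) = x·xⁿ, and x^(n−1) = x\xⁿ. -/
/-!
Clearing divisions, the left SUF law reads `((a·(b·u))/u)·(a·u) = a·(b·(a·u))`. Let `u` run over
the powers of `x`. If left multiplication by `a` and `b` moves every power of `x` forward by `i` and
`j` places, the law says that the quotient `x^(i+j+k) / x^k` is unchanged when `k` is replaced by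
`k + i`. For `i = ±1` it is therefore independent of `k`, and its value at `k = 0` is `x^(i+j)`; so
`x^(i+j)` moves powers by `i + j`. Multiplication by `x` is such a shift by `1`, and the law with
`a = x` and `b = (x\u)/u`, so that `a·(b·u) = u`, gives the shift by `-1`.
-/

/-- A loop `(Q, ·, \, /, 1)`: `mul x y = x·y`, `ld x y = x\y`, `rd x y = x/y`. -/
structure LoopStr (Q : Type*) where
  mul : Q → Q → Q
  ld : Q → Q → Q
  rd : Q → Q → Q
  one : Q
  ld_mul : ∀ x y, ld x (mul x y) = y
  rd_mul : ∀ x y, rd (mul y x) x = y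
  mul_ld : ∀ x y, mul x (ld x y) = y
  mul_rd : ∀ x y, mul (rd y x) x = y
  one_mul : ∀ x, mul one x = x
  mul_one : ∀ x, mul x one = x

namespace LoopStr

variable {Q : Type*} {L : LoopStr Q} {p : ℤ → Q} {a b : Q} {i j s : ℤ}

/-- Left semi-universal flexibility: every left principal isotope `x ∘ y = (x/u)·y` is flexible,
`x ∘ (y ∘ x) = (x ∘ y) ∘ x`, written out in the operations of the loop. -/
def IsLeftSUF (L : LoopStr Q) : Prop :=
  ∀ x y u, L.mul (L.rd x u) (L.mul (L.rd y u) x) = L.mul (L.rd (L.mul (L.rd x u) y) u) x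

/-- Left multiplication by `a` shifts the sequence `p` by `s` places. For the powers of `x`,
power-associativity says that each `xᵐ` shifts them by `m`. -/
def IsShift (L : LoopStr Q) (p : ℤ → Q) (s : ℤ) (a : Q) : Prop :=
  ∀ n, L.mul a (p n) = p (s + n)

/-- The quotient `p (s + k) / p k`, the only element whose left multiplication takes `p k` to
`p (s + k)`; some element shifts `p` by `s` exactly when these quotients agree for all `k`. -/
def shiftRatio (L : LoopStr Q) (p : ℤ → Q) (s k : ℤ) : Q :=
  L.rd (p (s + k)) (p k)

theorem rd_self (L : LoopStr Q) (x : Q) : L.rd x x = L.one := by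
  simpa only [L.one_mul] using L.rd_mul x L.one

theorem rd_one (L : LoopStr Q) (x : Q) : L.rd x L.one = x := by
  simpa only [L.mul_one] using L.rd_mul L.one x

theorem mul_right_injective (L : LoopStr Q) (x : Q) : Function.Injective (L.mul x) :=
  Function.LeftInverse.injective (L.ld_mul x)

theorem IsLeftSUF.rd_mul_mul (hL : L.IsLeftSUF) (a b u : Q) :
    L.mul (L.rd (L.mul a (L.mul b u)) u) (L.mul a u) = L.mul a (L.mul b (L.mul a u)) := by
  simpa only [L.rd_mul] using (hL (L.mul a u) (L.mul b u) u).symm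

theorem IsLeftSUF.rd_ld_mul_mul (hL : L.IsLeftSUF) (a u : Q) :
    L.mul (L.rd (L.ld a u) u) (L.mul a u) = u := by
  apply L.mul_right_injective a
  simpa only [L.mul_rd, L.mul_ld, L.rd_self, L.one_mul] using
    (hL.rd_mul_mul a (L.rd (L.ld a u) u) u).symm

theorem IsLeftSUF.rd_mul_eq_rd_ld (hL : L.IsLeftSUF) (a u : Q) :
    L.rd u (L.mul a u) = L.rd (L.ld a u) u := by
  simpa only [hL.rd_ld_mul_mul] using L.rd_mul (L.mul a u) (L.rd (L.ld a u) u)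

theorem IsShift.ld_eq (ha : L.IsShift p i a) (n : ℤ) : L.ld a (p n) = p (-i + n) := by
  simpa only [ha (-i + n), add_neg_cancel_left] using L.ld_mul a (p (-i + n))

theorem IsLeftSUF.periodic_shiftRatio_add (hL : L.IsLeftSUF)
    (ha : L.IsShift p i a) (hb : L.IsShift p j b) :
    Function.Periodic (L.shiftRatio p (i + j)) i := by
  intro k
  have h := hL.rd_mul_mul a b (p k)
  simp only [ha _, hb _, ← add_assoc] at h
  calc L.rd (p (i + j + (k + i))) (p (k + i))
      = L.rd (p (i + j + i + k)) (p (i + k)) := by rw [add_comm k i, ← add_assoc]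
    _ = L.rd (p (i + j + k)) (p k) := by rw [← h, L.rd_mul]

theorem IsLeftSUF.periodic_shiftRatio_neg (hL : L.IsLeftSUF) (ha : L.IsShift p i a) :
    Function.Periodic (L.shiftRatio p (-i)) i := by
  intro k
  calc L.rd (p (-i + (k + i))) (p (k + i))
      = L.rd (p k) (L.mul a (p k)) := by rw [ha k, add_comm k i, neg_add_cancel_left]
    _ = L.rd (L.ld a (p k)) (p k) := hL.rd_mul_eq_rd_ld a (p k)
    _ = L.rd (p (-i + k)) (p k) := by rw [ha.ld_eq]

theorem isShift_of_periodic_shiftRatio (hp : p 0 = L.one)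
    (h : Function.Periodic (L.shiftRatio p s) 1) : L.IsShift p s (p s) := by
  intro n
  have ratio_eq : L.shiftRatio p s n = p s := by
    calc L.shiftRatio p s n = L.shiftRatio p s 0 := by simpa using h.int_mul_eq n
      _ = p s := by rw [shiftRatio, add_zero, hp, L.rd_one]
  rw [← ratio_eq, shiftRatio, L.mul_rd]

theorem IsLeftSUF.isShift_self (hL : L.IsLeftSUF) (hp : p 0 = L.one) (ha : L.IsShift p 1 a)
    (m : ℤ) : L.IsShift p m (p m) := by
  have shift_neg_one : L.IsShift p (-1) (p (-1)) :=
    isShift_of_periodic_shiftRatio hp (hL.periodic_shiftRatio_neg ha)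
  induction m using Int.induction_on with
  | zero => intro n; rw [hp, L.one_mul, zero_add]
  | succ m ih =>
    rw [add_comm]
    exact isShift_of_periodic_shiftRatio hp (hL.periodic_shiftRatio_add ha ih)
  | pred m ih =>
    rw [sub_eq_neg_add]
    have periodic_neg_one := hL.periodic_shiftRatio_add shift_neg_one ih
    exact isShift_of_periodic_shiftRatio hp (by simpa only [neg_neg] using periodic_neg_one.neg)

end LoopStr

/-- Left SUF loops are power-associative: `xᵐ·xⁿ = x^(m+n)`,
where integer powers are defined left-associatedly. -/
theorem lsuf_power_associative {Q : Type*} (L : LoopStr Q)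
    (lsuf : ∀ x y u,
      L.mul (L.rd x u) (L.mul (L.rd y u) x)
        = L.mul (L.rd (L.mul (L.rd x u) y) u) x)
    (pow : Q → ℤ → Q)
    (pow_zero : ∀ x, pow x 0 = L.one)
    (pow_succ : ∀ x (n : ℤ), pow x (n + 1) = L.mul x (pow x n))
    (pow_pred : ∀ x (n : ℤ), pow x (n - 1) = L.ld x (pow x n)) :
    ∀ x : Q, ∀ m n : ℤ, L.mul (pow x m) (pow x n) = pow x (m + n) := by
  intro x
  have hL : L.IsLeftSUF := lsuf
  have shift_one : L.IsShift (pow x) 1 x := fun n => by rw [← pow_succ, add_comm]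
  exact hL.isShift_self (pow_zero x) shift_one
end

section
/- A loop Q with a two-sided inverse map x ↦ x⁻¹ (i.e., 1/x = x\1 = x⁻¹ for all x) satisfies the identity (x·u)·((y·u)·x) = (((x·u)·y)·u)·x for all x, y, u if and only if Q has the right inverse property ((y·x)·x⁻¹ = y for all x, y) and every isotope of the form x∘y = (x/u)·y is flexible, i.e., (x/u)·((y/u)·x) = (((x/u)·y)/u)·x for all x, y, u. -/
/-!
The identity says that each operation `x ∘ y = (x·u)·y` is flexible. If `u·v = 1`, flexibility for
`v` at the pair `(z/v, u)` reads `z·(z/v) = ((z·u)·v)·(z/v)`, and cancelling `z/v` yields the right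
inverse property. Under that property `x/u = x·u⁻¹` and inversion is an involution, so the
operations `(x/u)·y` are the same family as the operations `(x·u)·y`, reindexed by `u ↦ u⁻¹`.
-/

/-- Flexibility of a binary operation, unbundled so that it applies to operations derived
from a loop multiplication, such as `x ∘ y = (x/u)·y`. -/
def IsFlexible {Q : Type*} (op : Q → Q → Q) : Prop :=
  ∀ x y, op x (op y x) = op (op x y) x

namespace LoopStr

/-- The right inverse property (RIP) of a loop with respect to a map `inv`. No relation between
`inv` and the divisions is built in: the identity itself makes `inv x` a right inverse of `x`. -/
def HasRightInverseProperty {Q : Type*} (L : LoopStr Q) (inv : Q → Q) : Prop :=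
  ∀ x y, L.mul (L.mul y x) (inv x) = y

variable {Q : Type*} {L : LoopStr Q} {inv : Q → Q}

theorem mul_right_cancel {x y z : Q} (h : L.mul x z = L.mul y z) : x = y := by
  rw [← L.rd_mul z x, h, L.rd_mul]

theorem mul_mul_cancel_right_of_isFlexible {u v : Q} (huv : L.mul u v = L.one)
    (hflex : IsFlexible fun x y => L.mul (L.mul x v) y) (z : Q) :
    L.mul (L.mul z u) v = z := by
  have h : L.mul z (L.rd z v) = L.mul (L.mul (L.mul z u) v) (L.rd z v) := by
    simpa only [L.mul_rd, huv, L.one_mul] using hflex (L.rd z v) u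
  exact (mul_right_cancel h).symm

namespace HasRightInverseProperty

theorem mul_inv_self (hrip : L.HasRightInverseProperty inv) (x : Q) :
    L.mul x (inv x) = L.one := by
  simpa only [L.one_mul] using hrip x L.one

theorem inv_involutive (hrip : L.HasRightInverseProperty inv) : Function.Involutive inv :=
  fun x => by simpa only [hrip.mul_inv_self, L.one_mul] using hrip (inv x) x

theorem rd_eq_mul_inv (hrip : L.HasRightInverseProperty inv) (x u : Q) :
    L.rd x u = L.mul x (inv u) := by
  simpa only [L.mul_rd] using (hrip u (L.rd x u)).symm

theorem forall_isFlexible_rd_iff (hrip : L.HasRightInverseProperty inv) :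
    (∀ u, IsFlexible fun x y => L.mul (L.rd x u) y) ↔
      ∀ u, IsFlexible fun x y => L.mul (L.mul x u) y := by
  simp only [hrip.rd_eq_mul_inv]
  exact (hrip.inv_involutive.surjective.forall
    (p := fun u => IsFlexible fun x y => L.mul (L.mul x u) y)).symm

end HasRightInverseProperty

end LoopStr

theorem lsuf_rip_equiv_general {Q : Type*} (L : LoopStr Q) (inv : Q → Q)
    (hinv : ∀ x, L.ld x L.one = inv x) :
    (∀ x y u, L.mul (L.mul x u) (L.mul (L.mul y u) x)
        = L.mul (L.mul (L.mul (L.mul x u) y) u) x)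
    ↔ ((∀ x y, L.mul (L.mul y x) (inv x) = y)
        ∧ (∀ x y u, L.mul (L.rd x u) (L.mul (L.rd y u) x)
            = L.mul (L.rd (L.mul (L.rd x u) y) u) x)) := by
  constructor
  · intro h
    have hflex : ∀ u, IsFlexible fun x y => L.mul (L.mul x u) y := fun u x y => h x y u
    have hmul_inv : ∀ x, L.mul x (inv x) = L.one := fun x => hinv x ▸ L.mul_ld x L.one
    have hrip : L.HasRightInverseProperty inv := fun x =>
      LoopStr.mul_mul_cancel_right_of_isFlexible (hmul_inv x) (hflex (inv x))
    exact ⟨hrip, fun x y u => hrip.forall_isFlexible_rd_iff.2 hflex u x y⟩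
  · rintro ⟨hrip : L.HasRightInverseProperty inv, h⟩ x y u
    have hflex : ∀ u, IsFlexible fun x y => L.mul (L.rd x u) y := fun u x y => h x y u
    exact hrip.forall_isFlexible_rd_iff.1 hflex u x y

/-- A loop with a two-sided inverse satisfies
`(x·u)·((y·u)·x) = (((x·u)·y)·u)·x` iff it has the right inverse property and
every isotope `x ∘ y = (x/u)·y` is flexible. -/
theorem lsuf_rip_equiv {Q : Type*} (L : LoopStr Q) (inv : Q → Q)
    (hinv : ∀ x, L.rd L.one x = inv x ∧ L.ld x L.one = inv x) :
    (∀ x y u, L.mul (L.mul x u) (L.mul (L.mul y u) x)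
        = L.mul (L.mul (L.mul (L.mul x u) y) u) x)
    ↔ ((∀ x y, L.mul (L.mul y x) (inv x) = y)
        ∧ (∀ x y u, L.mul (L.rd x u) (L.mul (L.rd y u) x)
            = L.mul (L.rd (L.mul (L.rd x u) y) u) x)) :=
  lsuf_rip_equiv_general L inv fun x => (hinv x).2
end

section
/- In every universally flexible loop with the inverse property, the identity (u·(y·x⁻¹))·x = (u·(y·(u⁻¹·x⁻¹)))·(x·u) holds for all u, x, y. -/
/-- An inverse property quasigroup. Unique divisibility is not a field: the two inverse laws make
every translation bijective. -/
class IPQuasigroup (Q : Type*) extends Mul Q, Inv Q where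
  protected inv_mul_cancel_left : ∀ x y : Q, x⁻¹ * (x * y) = y
  protected mul_inv_cancel_right : ∀ y x : Q, y * x * x⁻¹ = y

namespace IPQuasigroup

variable {Q : Type*} [IPQuasigroup Q]

protected theorem mul_right_cancel {x y z : Q} (h : x * z = y * z) : x = y := by
  rw [← IPQuasigroup.mul_inv_cancel_right x z, h, IPQuasigroup.mul_inv_cancel_right]

protected theorem inv_inv (x : Q) : x⁻¹⁻¹ = x := by
  refine IPQuasigroup.mul_right_cancel (z := x) ?_
  calc x⁻¹⁻¹ * x
      = x⁻¹⁻¹ * (x⁻¹ * (x * x)) := by rw [IPQuasigroup.inv_mul_cancel_left x x]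
    _ = x * x := IPQuasigroup.inv_mul_cancel_left _ _

instance : InvolutiveInv Q where
  inv_inv := IPQuasigroup.inv_inv

protected theorem inv_mul_cancel_right (y x : Q) : y * x⁻¹ * x = y := by
  simpa only [inv_inv] using IPQuasigroup.mul_inv_cancel_right y x⁻¹

protected theorem mul_inv_rev (x y : Q) : (x * y)⁻¹ = y⁻¹ * x⁻¹ := by
  have y_mul_inv : y * (x * y)⁻¹ = x⁻¹ := by
    simpa only [IPQuasigroup.inv_mul_cancel_left] using
      IPQuasigroup.mul_inv_cancel_right x⁻¹ (x * y)
  rw [← y_mul_inv, IPQuasigroup.inv_mul_cancel_left]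

end IPQuasigroup

theorem uf_ip_identity_general {Q : Type*} [IPQuasigroup Q]
    (flexible : ∀ u : Q, IsFlexible fun x y : Q ↦ x * u⁻¹ * y) (u x y : Q) :
    u * (y * x⁻¹) * x = u * (y * (u⁻¹ * x⁻¹)) * (x * u) := by
  set d := u⁻¹ * x⁻¹
  have inv_d : d⁻¹ = x * u := by
    rw [IPQuasigroup.mul_inv_rev, inv_inv, inv_inv]
  have x_inv_mul : x⁻¹ * d⁻¹ = u := by
    rw [inv_d, IPQuasigroup.inv_mul_cancel_left]
  calc u * (y * x⁻¹) * x
      = x⁻¹ * d⁻¹ * (y * d * d⁻¹ * x⁻¹) * x := by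
        rw [x_inv_mul, IPQuasigroup.mul_inv_cancel_right]
    _ = x⁻¹ * d⁻¹ * (y * d) * d⁻¹ * x⁻¹ * x := congrArg (· * x) (flexible d x⁻¹ (y * d))
    _ = u * (y * d) * (x * u) := by
        rw [IPQuasigroup.inv_mul_cancel_right, x_inv_mul, inv_d]

namespace LoopStr

variable {Q : Type*} (L : LoopStr Q)

/-- The inverse property quasigroup underlying an inverse property loop. -/
abbrev toIPQuasigroup (inv : Q → Q) (lip : ∀ x y, L.mul (inv x) (L.mul x y) = y)
    (rip : ∀ x y, L.mul (L.mul y x) (inv x) = y) : IPQuasigroup Q where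
  mul := L.mul
  inv := inv
  inv_mul_cancel_left := lip
  mul_inv_cancel_right y x := rip x y

/-- The operation `x ∘ y = (x / u)·(v \ y)` of the principal isotope of a loop at `(u, v)`. -/
def principalIsotope (u v x y : Q) : Q :=
  L.mul (L.rd x u) (L.ld v y)

theorem one_ld (x : Q) : L.ld L.one x = x := by
  simpa only [L.one_mul] using L.ld_mul L.one x

theorem rd_eq_mul_inv {inv : Q → Q} (rip : ∀ x y, L.mul (L.mul y x) (inv x) = y) (x u : Q) :
    L.rd x u = L.mul x (inv u) := by
  simpa only [L.mul_rd] using (rip u (L.rd x u)).symm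

theorem principalIsotope_one {inv : Q → Q} (rip : ∀ x y, L.mul (L.mul y x) (inv x) = y) (u : Q) :
    L.principalIsotope u L.one = fun x y ↦ L.mul (L.mul x (inv u)) y := by
  funext x y
  rw [principalIsotope, L.rd_eq_mul_inv rip, L.one_ld]

end LoopStr

/-- In every universally flexible IP loop,
`(u·(y·x⁻¹))·x = (u·(y·(u⁻¹·x⁻¹)))·(x·u)`. -/
theorem uf_ip_identity {Q : Type*} (L : LoopStr Q) (inv : Q → Q)
    (lip : ∀ x y, L.mul (inv x) (L.mul x y) = y)
    (rip : ∀ x y, L.mul (L.mul y x) (inv x) = y)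
    (uf : ∀ x y u v,
      L.mul (L.rd x u) (L.ld v (L.mul (L.rd y u) (L.ld v x)))
        = L.mul (L.rd (L.mul (L.rd x u) (L.ld v y)) u) (L.ld v x)) :
    ∀ u x y, L.mul (L.mul u (L.mul y (inv x))) x
      = L.mul (L.mul u (L.mul y (L.mul (inv u) (inv x)))) (L.mul x u) := by
  let := L.toIPQuasigroup inv lip rip
  have isotope_flexible (u v : Q) : IsFlexible (L.principalIsotope u v) := fun x y ↦ uf x y u v
  have right_isotope_flexible (u : Q) : IsFlexible fun x y : Q ↦ x * u⁻¹ * y :=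
    L.principalIsotope_one rip u ▸ isotope_flexible u L.one
  exact uf_ip_identity_general right_isotope_flexible
end

section
/- Every Moufang loop is a stepping-up loop: in a Moufang loop (with its two-sided inverses), for all a, b, c, SA(a,b,c) implies SA(a,b,b·c). -/
/-- `SA x y z`: every triple from `{x, x⁻¹, y, y⁻¹, z, z⁻¹}` associates. -/
def SA {Q : Type*} (L : LoopStr Q) (inv : Q → Q) (x y z : Q) : Prop :=
  ∀ u v w : Q,
    u ∈ ({x, inv x, y, inv y, z, inv z} : Set Q) →
    v ∈ ({x, inv x, y, inv y, z, inv z} : Set Q) →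
    w ∈ ({x, inv x, y, inv y, z, inv z} : Set Q) →
    L.mul u (L.mul v w) = L.mul (L.mul u v) w

/-!
Say that `(x, y, z)` associates when `x(yz) = (xy)z`. Cancelling the final `y` in the Moufang
identity shows that `(x, y, z)` associates iff `(x, yz, y)` does, and the inverse property shows
that this happens iff `(x, yz, z⁻¹)` associates. Combining the two, it happens iff `(x, y, yz)`
associates: one associating triple steps up. It also follows that `(x, yz, y)` and `(x, y, yz)`
associate simultaneously; since `yz` is arbitrary, the last two entries can be swapped, and passing
to `(z⁻¹, y⁻¹, x⁻¹)` swaps the first two. Symmetry and the inverse property allow inverting any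
entry, and triples with a repeated entry always associate, so a single associating triple already
gives `SA`.
-/

namespace LoopStr

variable {Q : Type*} {L : LoopStr Q} {x y z : Q}

local infixl:70 " ⬝ " => LoopStr.mul L

theorem mul_right_cancel_iff : y ⬝ x = z ⬝ x ↔ y = z :=
  (Function.LeftInverse.injective (g := (L.rd · x)) (L.rd_mul x)).eq_iff

theorem mul_left_cancel_iff : x ⬝ y = x ⬝ z ↔ y = z :=
  (Function.LeftInverse.injective (L.ld_mul x)).eq_iff

/-- The left inverse of an element, encoded as `1 / x`. In a loop with the inverse property it is
the two-sided inverse. -/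
def inv (L : LoopStr Q) (x : Q) : Q :=
  L.rd L.one x

theorem inv_mul_self (x : Q) : L.inv x ⬝ x = L.one :=
  L.mul_rd x L.one

/-- The predicate that the triple `(x, y, z)` associates, bracketed as in `SA`. -/
def Assoc (L : LoopStr Q) (x y z : Q) : Prop :=
  L.mul x (L.mul y z) = L.mul (L.mul x y) z

/-- Inverse property (IP) loops. Fixing the inverse to be `LoopStr.inv` is no restriction: by the
first law at `y = 1`, any map satisfying both laws sends `x` to `1 / x`. -/
structure HasInverseProperty (L : LoopStr Q) : Prop where
  inv_mul_cancel_left : ∀ x y, L.mul (L.inv x) (L.mul x y) = y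
  mul_inv_cancel_right : ∀ x y, L.mul (L.mul y x) (L.inv x) = y

namespace HasInverseProperty

theorem inv_inv (hL : L.HasInverseProperty) (x : Q) : L.inv (L.inv x) = x := by
  simpa only [inv_mul_self, L.mul_one] using hL.inv_mul_cancel_left (L.inv x) x

theorem inv_inj (hL : L.HasInverseProperty) : L.inv x = L.inv y ↔ x = y :=
  (Function.LeftInverse.injective hL.inv_inv).eq_iff

theorem mul_inv_cancel_left (hL : L.HasInverseProperty) (x y : Q) : x ⬝ (L.inv x ⬝ y) = y := by
  simpa only [hL.inv_inv] using hL.inv_mul_cancel_left (L.inv x) y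

theorem mul_inv_rev (hL : L.HasInverseProperty) (x y : Q) :
    L.inv (x ⬝ y) = L.inv y ⬝ L.inv x := by
  have inv_mul_left : L.inv (x ⬝ y) ⬝ x = L.inv y := by
    simpa only [hL.mul_inv_cancel_right] using hL.inv_mul_cancel_left (x ⬝ y) (L.inv y)
  rw [← inv_mul_left, hL.mul_inv_cancel_right]

theorem assoc_inv_rev_iff (hL : L.HasInverseProperty) :
    L.Assoc (L.inv z) (L.inv y) (L.inv x) ↔ L.Assoc x y z := by
  simp only [Assoc, ← hL.mul_inv_rev, hL.inv_inj]
  exact eq_comm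

theorem assoc_mul_inv_iff (hL : L.HasInverseProperty) :
    L.Assoc x (y ⬝ z) (L.inv z) ↔ L.Assoc x y z := by
  calc x ⬝ (y ⬝ z ⬝ L.inv z) = x ⬝ (y ⬝ z) ⬝ L.inv z
      ↔ x ⬝ y ⬝ z ⬝ L.inv z = x ⬝ (y ⬝ z) ⬝ L.inv z := by simp only [hL.mul_inv_cancel_right]
    _ ↔ L.Assoc x y z := mul_right_cancel_iff.trans eq_comm

theorem assoc_inv_mul_iff (hL : L.HasInverseProperty) :
    L.Assoc (L.inv x) (x ⬝ y) z ↔ L.Assoc x y z := by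
  calc L.inv x ⬝ (x ⬝ y ⬝ z) = L.inv x ⬝ (x ⬝ y) ⬝ z
      ↔ L.inv x ⬝ (x ⬝ y ⬝ z) = L.inv x ⬝ (x ⬝ (y ⬝ z)) := by simp only [hL.inv_mul_cancel_left]
    _ ↔ L.Assoc x y z := mul_left_cancel_iff.trans eq_comm

end HasInverseProperty

/-- Moufang loops, defined by the identity `((xy)z)y = x(y(zy))`. -/
def IsMoufang (L : LoopStr Q) : Prop :=
  ∀ x y z, L.mul (L.mul (L.mul x y) z) y = L.mul x (L.mul y (L.mul z y))

namespace IsMoufang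

theorem hasInverseProperty (hL : L.IsMoufang) : L.HasInverseProperty := by
  have inv_mul_cancel_left (x y : Q) : L.inv x ⬝ (x ⬝ y) = y := by
    simpa only [inv_mul_self, L.one_mul, L.mul_rd] using (hL (L.inv x) x (L.rd y x)).symm
  refine ⟨inv_mul_cancel_left, fun x y => ?_⟩
  rw [← mul_right_cancel_iff (x := x), hL, inv_mul_self, L.mul_one]

theorem assoc_outer_self (hL : L.IsMoufang) (x y : Q) : L.Assoc x y x := by
  simpa only [Assoc, L.one_mul] using (hL L.one x y).symm

theorem assoc_right_self (hL : L.IsMoufang) (x y : Q) : L.Assoc x y y := by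
  simpa only [Assoc, L.one_mul, L.mul_one] using (hL x y L.one).symm

theorem assoc_mul_self_iff (hL : L.IsMoufang) : L.Assoc x (y ⬝ z) y ↔ L.Assoc x y z := by
  calc x ⬝ (y ⬝ z ⬝ y) = x ⬝ (y ⬝ z) ⬝ y
      ↔ x ⬝ y ⬝ z ⬝ y = x ⬝ (y ⬝ z) ⬝ y := by rw [hL, hL.assoc_outer_self y z]
    _ ↔ L.Assoc x y z := mul_right_cancel_iff.trans eq_comm

theorem assoc_self_mul_iff (hL : L.IsMoufang) : L.Assoc x y (y ⬝ z) ↔ L.Assoc x y z := by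
  have hIP := hL.hasInverseProperty
  calc L.Assoc x y (y ⬝ z)
      ↔ L.Assoc x (y ⬝ z ⬝ L.inv z) (y ⬝ z) := by rw [hIP.mul_inv_cancel_right]
    _ ↔ L.Assoc x (y ⬝ z) (L.inv z) := hL.assoc_mul_self_iff
    _ ↔ L.Assoc x y z := hIP.assoc_mul_inv_iff

theorem assoc_swap_right (hL : L.IsMoufang) : L.Assoc x z y ↔ L.Assoc x y z := by
  rw [← L.mul_ld y z, hL.assoc_mul_self_iff, hL.assoc_self_mul_iff]

theorem assoc_swap_left (hL : L.IsMoufang) : L.Assoc y x z ↔ L.Assoc x y z := by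
  have hIP := hL.hasInverseProperty
  rw [← hIP.assoc_inv_rev_iff, hL.assoc_swap_right, hIP.assoc_inv_rev_iff]

theorem assoc_left_self (hL : L.IsMoufang) (x y : Q) : L.Assoc x x y :=
  hL.assoc_swap_right.1 (hL.assoc_outer_self x y)

theorem assoc_rotate (hL : L.IsMoufang) : L.Assoc y z x ↔ L.Assoc x y z :=
  hL.assoc_swap_right.trans hL.assoc_swap_left

theorem assoc_inv_left_iff (hL : L.IsMoufang) : L.Assoc (L.inv x) y z ↔ L.Assoc x y z := by
  have hIP := hL.hasInverseProperty
  have mul_left_iff (t : Q) : L.Assoc x (x ⬝ t) z ↔ L.Assoc x t z :=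
    hL.assoc_rotate.trans <| hL.assoc_self_mul_iff.trans hL.assoc_rotate.symm
  rw [← hIP.mul_inv_cancel_left x y, hIP.assoc_inv_mul_iff, mul_left_iff]

theorem assoc_inv_middle_iff (hL : L.IsMoufang) : L.Assoc x (L.inv y) z ↔ L.Assoc x y z := by
  rw [hL.assoc_swap_left, hL.assoc_inv_left_iff, hL.assoc_swap_left]

theorem assoc_inv_right_iff (hL : L.IsMoufang) : L.Assoc x y (L.inv z) ↔ L.Assoc x y z := by
  rw [hL.assoc_swap_right, hL.assoc_inv_middle_iff, hL.assoc_swap_right]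

theorem assoc_of_mem (hL : L.IsMoufang) (h : L.Assoc x y z) {u v w : Q}
    (hu : u ∈ ({x, y, z} : Set Q)) (hv : v ∈ ({x, y, z} : Set Q)) (hw : w ∈ ({x, y, z} : Set Q)) :
    L.Assoc u v w := by
  have hyxz : L.Assoc y x z := hL.assoc_swap_left.2 h
  have hxzy : L.Assoc x z y := hL.assoc_swap_right.2 h
  have hyzx : L.Assoc y z x := hL.assoc_rotate.2 h
  have hzxy : L.Assoc z x y := hL.assoc_rotate.2 hyzx
  have hzyx : L.Assoc z y x := hL.assoc_rotate.2 hxzy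
  rcases hu with rfl | rfl | rfl <;> rcases hv with rfl | rfl | rfl <;>
    rcases hw with rfl | rfl | rfl <;>
    first
    | assumption
    | apply hL.assoc_left_self
    | apply hL.assoc_outer_self
    | apply hL.assoc_right_self

theorem sa_of_assoc (hL : L.IsMoufang) (h : L.Assoc x y z) : SA L L.inv x y z := by
  have eq_or_eq_inv (u : Q) (hu : u ∈ ({x, L.inv x, y, L.inv y, z, L.inv z} : Set Q)) :
      ∃ u' ∈ ({x, y, z} : Set Q), u = u' ∨ u = L.inv u' := by
    rcases hu with rfl | rfl | rfl | rfl | rfl | rfl <;> simp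
  intro u v w hu hv hw
  obtain ⟨u', hu', hu⟩ := eq_or_eq_inv u hu
  obtain ⟨v', hv', hv⟩ := eq_or_eq_inv v hv
  obtain ⟨w', hw', hw⟩ := eq_or_eq_inv w hw
  change L.Assoc u v w
  rcases hu with rfl | rfl <;> rcases hv with rfl | rfl <;> rcases hw with rfl | rfl <;>
    simpa only [hL.assoc_inv_left_iff, hL.assoc_inv_middle_iff, hL.assoc_inv_right_iff]
      using hL.assoc_of_mem h hu' hv' hw'

end IsMoufang

end LoopStr

theorem moufang_stepping_up_general {Q : Type*} {L : LoopStr Q} (hL : L.IsMoufang) {a b c : Q}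
    (h : L.Assoc a b c) : SA L L.inv a b (L.mul b c) :=
  hL.sa_of_assoc (hL.assoc_self_mul_iff.2 h)

/-- Every Moufang loop (with its two-sided inverses) is a stepping-up loop. -/
theorem moufang_stepping_up {Q : Type*} (L : LoopStr Q) (inv : Q → Q)
    (hinv : ∀ x, L.rd L.one x = inv x ∧ L.ld x L.one = inv x)
    (moufang : ∀ x y z,
      L.mul (L.mul (L.mul x y) z) y = L.mul x (L.mul y (L.mul z y))) :
    ∀ a b c, SA L inv a b c → SA L inv a b (L.mul b c) := by
  obtain rfl : L.inv = inv := funext fun x => (hinv x).1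
  exact fun a b c h => moufang_stepping_up_general moufang (h a b c (by simp) (by simp) (by simp))
end
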